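/- arXiv:1907.06761 — 2 statements merged into one kernel-verified Lean document; each statement's English description precedes it below -/
import Mathlib

section
/- Suppose n is even. Then the fixed subring A^G is strictly larger than the ℂ-subalgebra of A generated by the orbit sums of degree n: A^G ≠ the ℂ-subalgebra generated by {O(a,b,c) : a, b, c ≥ 0, a+2b+c = n}. (Together with the upper bound, this shows β(g) = 2n for the action on the down-up algebra A(0,1) when n is even.) -/
/-!
Setting: `lam n = exp(2πi/n)` is a primitive `n`-th root of unity in `ℂ`.
`DUAlg` is the graded down-up algebra `A(0,1) = ℂ⟨u,d⟩/(d²u - ud², du² - u²d)`,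
with generators `uGen`, `dGen`.  The automorphism `g` (of order `2n`) is
determined by `g u = d`, `g d = lam n • u`, and generates the cyclic group `G`,
so that the fixed subring `A^G` is `{a | g a = a}`.  The orbit sum is
`orbitSum n a b c = u^a (du)^b d^c + (lam n)^(b+c) • (d^a (ud)^b u^c)`.
-/

noncomputable section

/-- `lam n = exp(2πi/n)`, a primitive `n`-th root of unity. -/
def lam (n : ℕ) : ℂ := Complex.exp (2 * (Real.pi : ℂ) * Complex.I / (n : ℂ))

/-- The defining relations of the down-up algebra `A(0,1)`:
`d²u = ud²` and `du² = u²d` (here `0` plays the role of `u`, `1` of `d`). -/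
inductive DownUpRel : FreeAlgebra ℂ (Fin 2) → FreeAlgebra ℂ (Fin 2) → Prop
  | rel1 : DownUpRel (FreeAlgebra.ι ℂ 1 * FreeAlgebra.ι ℂ 1 * FreeAlgebra.ι ℂ 0)
      (FreeAlgebra.ι ℂ 0 * FreeAlgebra.ι ℂ 1 * FreeAlgebra.ι ℂ 1)
  | rel2 : DownUpRel (FreeAlgebra.ι ℂ 1 * FreeAlgebra.ι ℂ 0 * FreeAlgebra.ι ℂ 0)
      (FreeAlgebra.ι ℂ 0 * FreeAlgebra.ι ℂ 0 * FreeAlgebra.ι ℂ 1)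

/-- The graded down-up algebra `A(0,1)`. -/
abbrev DUAlg : Type := RingQuot DownUpRel

/-- The generator `u` of `A(0,1)`. -/
def uGen : DUAlg := RingQuot.mkAlgHom ℂ DownUpRel (FreeAlgebra.ι ℂ 0)

/-- The generator `d` of `A(0,1)`. -/
def dGen : DUAlg := RingQuot.mkAlgHom ℂ DownUpRel (FreeAlgebra.ι ℂ 1)

/-- Orbit sum `O(a,b,c) = u^a (du)^b d^c + λ^(b+c) d^a (ud)^b u^c`. -/
def orbitSum (n a b c : ℕ) : DUAlg :=
  uGen ^ a * (dGen * uGen) ^ b * dGen ^ c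
    + (lam n ^ (b + c)) • (dGen ^ a * (uGen * dGen) ^ b * uGen ^ c)

/-!
An orbit sum is `m + g m` for a monomial `m` in `u` and `d`. On the one-dimensional representations
`u ↦ x`, `d ↦ y` the automorphism `g` acts by `(x, y) ↦ (y, λ x)`, and the vector `(1, z)` with
`z ^ 2 = λ` is an eigenvector with eigenvalue `z`. Hence `g m` takes at `(1, z)` the value of `m`
times `z ^ deg m`. For `z = exp(πi/n)` we have `z ^ n = -1`, so orbit sums of degree `n` vanish at
`(1, z)` and every element they generate takes its constant term as value there; but orbit sums of
degree `2n`, which are also fixed by `g`, have no constant term and do not vanish at `(1, z)`.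
-/

theorem isPrimitiveRoot_lam {n : ℕ} (hn : n ≠ 0) : IsPrimitiveRoot (lam n) n :=
  Complex.isPrimitiveRoot_exp n hn

theorem lam_pow_eq_one_of_dvd {n k : ℕ} (h : n ∣ k) : lam n ^ k = 1 := by
  rcases eq_or_ne n 0 with rfl | hn
  · rw [zero_dvd_iff.mp h, pow_zero]
  · exact ((isPrimitiveRoot_lam hn).pow_eq_one_iff_dvd k).mpr h

theorem lam_two_mul_sq (n : ℕ) : lam (2 * n) ^ 2 = lam n := by
  rw [lam, lam, ← Complex.exp_nat_mul]
  congr 1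
  push_cast
  ring

theorem lam_two_mul_pow_self {n : ℕ} (hn : n ≠ 0) : lam (2 * n) ^ n = -1 :=
  ((isPrimitiveRoot_lam (mul_ne_zero two_ne_zero hn)).pow (by positivity)
    (mul_comm 2 n)).eq_neg_one_of_two_right

namespace DUAlg

theorem map_orbitSum_of_dvd {F : Type*} [FunLike F DUAlg DUAlg] [AlgHomClass F ℂ DUAlg DUAlg]
    (g : F) {n a b c : ℕ} (hgu : g uGen = dGen) (hgd : g dGen = lam n • uGen)
    (h : n ∣ a + 2 * b + c) : g (orbitSum n a b c) = orbitSum n a b c := by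
  have hlam : lam n ^ (b + c) * (lam n ^ b * lam n ^ a) = 1 := by
    rw [← lam_pow_eq_one_of_dvd h]
    ring
  have hfirst : g (uGen ^ a * (dGen * uGen) ^ b * dGen ^ c) =
      lam n ^ (b + c) • (dGen ^ a * (uGen * dGen) ^ b * uGen ^ c) := by
    simp only [map_mul, map_pow, hgu, hgd, smul_mul_assoc, mul_smul_comm, smul_pow, smul_smul,
      pow_add, mul_comm]
  have hsecond : g (lam n ^ (b + c) • (dGen ^ a * (uGen * dGen) ^ b * uGen ^ c)) =
      uGen ^ a * (dGen * uGen) ^ b * dGen ^ c := by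
    simp only [map_smul, map_mul, map_pow, hgu, hgd, smul_mul_assoc, mul_smul_comm, smul_pow,
      smul_smul]
    rw [hlam, one_smul]
  rw [orbitSum, map_add, hfirst, hsecond, add_comm]

section Evaluation

variable {B : Type*} [CommSemiring B] [Algebra ℂ B]

/-- Evaluation of the down-up algebra at a point `(x, y)` of a commutative `ℂ`-algebra: the
homomorphism with `u ↦ x` and `d ↦ y`. For `B = ℂ` these are the one-dimensional representations,
and `eval 0 0` is the augmentation of the grading. -/
def eval (x y : B) : DUAlg →ₐ[ℂ] B :=
  RingQuot.liftAlgHom ℂ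
    ⟨FreeAlgebra.lift ℂ ![x, y], by rintro _ _ (_ | _) <;> simp <;> ring⟩

@[simp]
theorem eval_uGen (x y : B) : eval x y uGen = x := by
  simp [eval, uGen]

@[simp]
theorem eval_dGen (x y : B) : eval x y dGen = y := by
  simp [eval, dGen]

theorem eval_orbitSum (x y : B) (n a b c : ℕ) :
    eval x y (orbitSum n a b c) =
      x ^ (a + b) * y ^ (b + c) + lam n ^ (b + c) • (x ^ (b + c) * y ^ (a + b)) := by
  simp only [orbitSum, map_add, map_smul, map_mul, map_pow, eval_uGen, eval_dGen]
  rw [Algebra.smul_def, Algebra.smul_def]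
  ring

theorem eval_zero_orbitSum {n a b c : ℕ} (h : a + 2 * b + c ≠ 0) :
    eval (0 : B) 0 (orbitSum n a b c) = 0 := by
  have hdeg : a + b + (b + c) ≠ 0 := by lia
  rw [eval_orbitSum, ← pow_add, ← pow_add, add_comm (b + c), zero_pow hdeg, smul_zero, add_zero]

theorem eval_one_orbitSum {n : ℕ} {z : B} (hz : z ^ 2 = algebraMap ℂ B (lam n)) (a b c : ℕ) :
    eval 1 z (orbitSum n a b c) = z ^ (b + c) * (1 + z ^ (a + 2 * b + c)) := by
  rw [eval_orbitSum, Algebra.smul_def, map_pow, ← hz]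
  ring

end Evaluation

theorem eqOn_eval_adjoin_orbitSum {B : Type*} [CommRing B] [Algebra ℂ B] {n m : ℕ} {z : B}
    (hz : z ^ 2 = algebraMap ℂ B (lam n)) (hzm : z ^ m = -1) (hm : m ≠ 0) :
    Set.EqOn (eval 1 z) (eval 0 0) (Algebra.adjoin ℂ
      {x : DUAlg | ∃ a b c : ℕ, a + 2 * b + c = m ∧ x = orbitSum n a b c}) := by
  rw [AlgHom.eqOn_adjoin_iff]
  rintro _ ⟨a, b, c, rfl, rfl⟩
  rw [eval_one_orbitSum hz, hzm, add_neg_cancel, mul_zero, eval_zero_orbitSum hm]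

theorem orbitSum_notMem_adjoin_of_two_mul_dvd {n a b c : ℕ} (h₀ : a + 2 * b + c ≠ 0)
    (h : 2 * n ∣ a + 2 * b + c) :
    orbitSum n a b c ∉ Algebra.adjoin ℂ
      {x : DUAlg | ∃ a b c : ℕ, a + 2 * b + c = n ∧ x = orbitSum n a b c} := by
  intro hmem
  have hn : n ≠ 0 := right_ne_zero_of_mul (ne_zero_of_dvd_ne_zero h₀ h)
  have hz : lam (2 * n) ^ 2 = algebraMap ℂ ℂ (lam n) := lam_two_mul_sq n
  have heval : lam (2 * n) ^ (b + c) * (1 + lam (2 * n) ^ (a + 2 * b + c)) = 0 := by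
    rw [← eval_one_orbitSum hz, eqOn_eval_adjoin_orbitSum hz (lam_two_mul_pow_self hn) hn hmem,
      eval_zero_orbitSum h₀]
  rw [lam_pow_eq_one_of_dvd h, one_add_one_eq_two] at heval
  exact mul_ne_zero (pow_ne_zero _ (Complex.exp_ne_zero _)) two_ne_zero heval

end DUAlg

theorem fixed_ne_adjoin_of_even_general (n : ℕ) (hn : 0 < n)
    (g : DUAlg ≃ₐ[ℂ] DUAlg) (hgu : g uGen = dGen) (hgd : g dGen = lam n • uGen) :
    {x : DUAlg | g x = x} ≠
      ↑(Algebra.adjoin ℂ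
        {x : DUAlg | ∃ a b c : ℕ, a + 2 * b + c = n ∧ x = orbitSum n a b c}) := by
  have hfixed : orbitSum n n 0 n ∈ {x : DUAlg | g x = x} :=
    DUAlg.map_orbitSum_of_dvd g hgu hgd ⟨2, by ring⟩
  have hnotMem := DUAlg.orbitSum_notMem_adjoin_of_two_mul_dvd
    (n := n) (a := n) (b := 0) (c := n) (by lia) ⟨1, by ring⟩
  exact fun heq ↦ hnotMem (heq.subset hfixed)

/-- If `n` is even then the fixed subring `A^G` of the down-up algebra `A(0,1)`
is strictly larger than the `ℂ`-subalgebra generated by the orbit sums of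
degree `n`. -/
theorem fixed_ne_adjoin_of_even (n : ℕ) (hn : 0 < n) (hne : Even n)
    (g : DUAlg ≃ₐ[ℂ] DUAlg) (hgu : g uGen = dGen) (hgd : g dGen = lam n • uGen) :
    {x : DUAlg | g x = x} ≠
      ↑(Algebra.adjoin ℂ
        {x : DUAlg | ∃ a b c : ℕ, a + 2 * b + c = n ∧ x = orbitSum n a b c}) :=
  fixed_ne_adjoin_of_even_general n hn g hgu hgd
end
end

section
/- Suppose n is odd, and let i, j, p, q be nonnegative integers with 2i+j ≤ n and 2p+q ≤ 2n. Then the reversed product O(2n−2p−q, p, q)·O(n−2i−j, i, j) in A satisfies: it equals O(n−2i−j, i, j)·O(2n−2p−q−1, p+1, q−1) if q is odd; it equals O(n−2i−j, i, j)·O(2n−q, 0, q) if q is even and p = 0; and it equals O(n−2i−j, i, j)·O(2n−2p−q+1, p−1, q+1) if q is even and p ≥ 1. -/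
/-!
Setting: `lam n = exp(2πi/n)` is a primitive `n`-th root of unity in `ℂ`.
`DUAlg` is the graded down-up algebra `A(0,1) = ℂ⟨u,d⟩/(d²u - ud², du² - u²d)`,
with generators `uGen`, `dGen`.  The automorphism `g` (of order `2n`) is
determined by `g u = d`, `g d = lam n • u`, and generates the cyclic group `G`,
so that the fixed subring `A^G` is `{a | g a = a}`.  The orbit sum is
`orbitSum n a b c = u^a (du)^b d^c + (lam n)^(b+c) • (d^a (ud)^b u^c)`.
-/

noncomputable section

/-!
In `A(0,1)` the elements `u²` and `d²` are central, while moving `u` or `d` past `du` or `ud` swaps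
these two: `u(du) = (ud)u` and `u(ud) = u²d = du² = (du)u`. An orbit sum of even degree is a
combination of words built from central even powers and powers of `du` or `ud`, so each generator
swaps it with the orbit sum obtained by exchanging `du` and `ud`. A word of odd degree then swaps
the two as well, and so does an orbit sum of odd degree.
-/

section Swaps

variable {M R : Type*} {v w x y x' y' : M}

/-- Moving `w` past `x` turns it into `y` and vice versa: `w * x = y * w` and `w * y = x * w`.
This is how a generator of the down-up algebra acts on `du` and `ud`. -/
def Swaps [Mul M] (w x y : M) : Prop :=
  SemiconjBy w x y ∧ SemiconjBy w y x

namespace Swaps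

theorem of_commute [Mul M] (h : Commute w x) : Swaps w x x :=
  ⟨h, h⟩

theorem symm [Mul M] (h : Swaps w x y) : Swaps w y x :=
  And.symm h

theorem mul_right [Semigroup M] (h : Swaps w x y) (h' : Swaps w x' y') :
    Swaps w (x * x') (y * y') :=
  ⟨h.1.mul_right h'.1, h.2.mul_right h'.2⟩

theorem pow_right [Monoid M] (h : Swaps w x y) (k : ℕ) : Swaps w (x ^ k) (y ^ k) :=
  ⟨h.1.pow_right k, h.2.pow_right k⟩

theorem add_right [Distrib M] (h : Swaps w x y) (h' : Swaps w x' y') :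
    Swaps w (x + x') (y + y') :=
  ⟨h.1.add_right h'.1, h.2.add_right h'.2⟩

theorem smul_right [Mul M] [SMul R M] [SMulCommClass R M M] [IsScalarTower R M M]
    (h : Swaps w x y) (r : R) : Swaps w (r • x) (r • y) :=
  ⟨h.1.smul_right r, h.2.smul_right r⟩

theorem commute_mul [Semigroup M] (hv : Swaps v x y) (hw : Swaps w x y) : Commute (v * w) x :=
  hv.2.mul_left hw.1

theorem commute_pow [Monoid M] (h : Swaps w x y) {k : ℕ} (hk : Even k) : Commute (w ^ k) x := by
  obtain ⟨m, rfl⟩ := hk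
  rw [← two_mul, pow_mul, pow_two]
  exact (h.commute_mul h).pow_left m

theorem semiconjBy_pow [Monoid M] (h : Swaps w x y) {k : ℕ} (hk : Odd k) :
    SemiconjBy (w ^ k) x y := by
  obtain ⟨m, rfl⟩ := hk
  rw [pow_succ]
  exact SemiconjBy.mul_left (h.symm.commute_pow (even_two_mul m)) h.1

end Swaps

end Swaps

section DownUpWord

variable {M : Type*} [Monoid M] {u d w x y : M} {a c : ℕ}

/-- The word `u^a (du)^b d^c`; for the generators of a down-up algebra these words form the
standard basis. -/
def downUpWord (u d : M) (a b c : ℕ) : M :=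
  u ^ a * (d * u) ^ b * d ^ c

theorem downUpWord_succ_succ (u d : M) (a b c : ℕ) :
    downUpWord u d (a + 1) b (c + 1) = u ^ a * (u * d) ^ (b + 1) * d ^ c :=
  calc u ^ (a + 1) * (d * u) ^ b * d ^ (c + 1)
    _ = u ^ a * (u * (d * u) ^ b) * (d * d ^ c) := by
      rw [pow_succ, pow_succ' d, mul_assoc (u ^ a)]
    _ = u ^ a * ((u * d) ^ b * u) * (d * d ^ c) := by rw [mul_pow_mul]
    _ = u ^ a * (u * d) ^ (b + 1) * d ^ c := by simp only [pow_succ, mul_assoc]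

theorem Swaps.semiconjBy_downUpWord (hu : Swaps u x y) (hd : Swaps d x y) (b : ℕ)
    (hac : Odd (a + c)) : SemiconjBy (downUpWord u d a b c) x y := by
  rcases Nat.even_or_odd c with hc | hc
  · have ha : Odd a := Nat.odd_add.mp hac |>.mpr hc
    have hdu : Commute ((d * u) ^ b) x := (hd.commute_mul hu).pow_left b
    exact ((hu.semiconjBy_pow ha).mul_left hdu).mul_left (hd.commute_pow hc)
  · have ha : Even a := Nat.odd_add'.mp hac |>.mp hc
    have hdu : Commute ((d * u) ^ b) y := (hd.symm.commute_mul hu.symm).pow_left b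
    exact SemiconjBy.mul_left ((hu.symm.commute_pow ha).mul_left hdu) (hd.semiconjBy_pow hc)

/-- The defining relations `d²u = ud²` and `du² = u²d` of `A(0,1)`, imposed on two elements of an
arbitrary monoid. -/
structure IsDownUpPair (u d : M) : Prop where
  sq_mul : d * d * u = u * d * d
  mul_sq : d * u * u = u * u * d

namespace IsDownUpPair

theorem symm (h : IsDownUpPair u d) : IsDownUpPair d u :=
  ⟨h.mul_sq.symm, h.sq_mul.symm⟩

theorem commute_pow (h : IsDownUpPair u d) (hw : w = u ∨ w = d) (ha : Even a) :
    Commute w (u ^ a) := by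
  obtain ⟨m, rfl⟩ := ha
  rw [← two_mul, pow_mul, pow_two]
  suffices Commute w (u * u) from this.pow_right m
  rcases hw with rfl | rfl
  · exact (Commute.refl w).mul_right (Commute.refl w)
  · exact (mul_assoc w u u).symm.trans h.mul_sq

theorem swaps_mul (h : IsDownUpPair u d) (hw : w = u ∨ w = d) : Swaps w (d * u) (u * d) := by
  rcases hw with rfl | rfl
  · exact ⟨(mul_assoc w d w).symm, (mul_assoc w w d).symm.trans h.mul_sq.symm⟩
  · exact ⟨(mul_assoc w w u).symm.trans h.sq_mul, (mul_assoc w u w).symm⟩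

theorem swaps_downUpWord (h : IsDownUpPair u d) (hw : w = u ∨ w = d) (b : ℕ) (ha : Even a)
    (hc : Even c) : Swaps w (downUpWord u d a b c) (u ^ a * (u * d) ^ b * d ^ c) :=
  ((Swaps.of_commute (h.commute_pow hw ha)).mul_right ((h.swaps_mul hw).pow_right b)).mul_right
    (Swaps.of_commute (h.symm.commute_pow hw.symm hc))

end IsDownUpPair

end DownUpWord

section WeightedOrbitSum

variable {R A : Type*} [CommSemiring R] [Semiring A] [Algebra R A] {u d w x y : A} {a c : ℕ}

/-- The orbit sum `O(a,b,c)` for an arbitrary scalar `l` in place of `λ` and arbitrary elements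
`u`, `d` of an algebra in place of the generators of `A(0,1)`. -/
def weightedOrbitSum (l : R) (u d : A) (a b c : ℕ) : A :=
  downUpWord u d a b c + l ^ (b + c) • downUpWord d u a b c

theorem Swaps.semiconjBy_weightedOrbitSum (hu : Swaps u x y) (hd : Swaps d x y) (l : R) (b : ℕ)
    (hac : Odd (a + c)) : SemiconjBy (weightedOrbitSum l u d a b c) x y :=
  (hu.semiconjBy_downUpWord hd b hac).add_left ((hd.semiconjBy_downUpWord hu b hac).smul_left _)

namespace IsDownUpPair

theorem swaps_weightedOrbitSum_succ (h : IsDownUpPair u d) (hw : w = u ∨ w = d) (l : R) (b : ℕ)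
    (ha : Even a) (hc : Even c) :
    Swaps w (weightedOrbitSum l u d a (b + 1) c) (weightedOrbitSum l u d (a + 1) b (c + 1)) := by
  rw [weightedOrbitSum, weightedOrbitSum, downUpWord_succ_succ, downUpWord_succ_succ,
    Nat.add_right_comm b 1 c]
  exact (h.swaps_downUpWord hw (b + 1) ha hc).add_right
    ((h.symm.swaps_downUpWord hw.symm (b + 1) ha hc).smul_right _)

theorem swaps_weightedOrbitSum_zero (h : IsDownUpPair u d) (hw : w = u ∨ w = d) (l : R)
    (ha : Even a) (hc : Even c) :
    Swaps w (weightedOrbitSum l u d a 0 c) (weightedOrbitSum l u d a 0 c) := by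
  simpa only [weightedOrbitSum, downUpWord, pow_zero] using
    (h.swaps_downUpWord hw 0 ha hc).add_right
      ((h.symm.swaps_downUpWord hw.symm 0 ha hc).smul_right (l ^ (0 + c)))

end IsDownUpPair

theorem orbitSum_deg_two_n_mul_deg_n_general (h : IsDownUpPair u d) (l : R) {r i j p q : ℕ}
    (haq : Even (a + q)) (hrj : Odd (r + j)) :
    (Odd q →
      weightedOrbitSum l u d a p q * weightedOrbitSum l u d r i j =
        weightedOrbitSum l u d r i j * weightedOrbitSum l u d (a - 1) (p + 1) (q - 1)) ∧
    (Even q → p = 0 →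
      weightedOrbitSum l u d a p q * weightedOrbitSum l u d r i j =
        weightedOrbitSum l u d r i j * weightedOrbitSum l u d a 0 q) ∧
    (Even q → 1 ≤ p →
      weightedOrbitSum l u d a p q * weightedOrbitSum l u d r i j =
        weightedOrbitSum l u d r i j * weightedOrbitSum l u d (a + 1) (p - 1) (q + 1)) := by
  have mul_eq {x y : A} (hxy : ∀ w, w = u ∨ w = d → Swaps w x y) :
      x * weightedOrbitSum l u d r i j = weightedOrbitSum l u d r i j * y :=
    ((hxy u (.inl rfl)).symm.semiconjBy_weightedOrbitSum (hxy d (.inr rfl)).symm l i hrj).eq.symm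
  refine ⟨fun hq => ?_, fun hq hp => ?_, fun hq hp => ?_⟩
  · obtain ⟨b, rfl⟩ : Odd a := Nat.even_add'.mp haq |>.mpr hq
    obtain ⟨c, rfl⟩ := hq
    exact mul_eq fun w hw =>
      (h.swaps_weightedOrbitSum_succ hw l p (even_two_mul b) (even_two_mul c)).symm
  · subst hp
    have ha : Even a := Nat.even_add.mp haq |>.mpr hq
    exact mul_eq fun w hw => h.swaps_weightedOrbitSum_zero hw l ha hq
  · obtain ⟨s, rfl⟩ := Nat.exists_eq_add_of_le' hp
    have ha : Even a := Nat.even_add.mp haq |>.mpr hq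
    exact mul_eq fun w hw => h.swaps_weightedOrbitSum_succ hw l s ha hq

end WeightedOrbitSum

theorem isDownUpPair_uGen_dGen : IsDownUpPair uGen dGen where
  sq_mul := by simpa only [map_mul, uGen, dGen] using RingQuot.mkAlgHom_rel ℂ DownUpRel.rel1
  mul_sq := by simpa only [map_mul, uGen, dGen] using RingQuot.mkAlgHom_rel ℂ DownUpRel.rel2

theorem orbitSum_eq_weightedOrbitSum (n a b c : ℕ) :
    orbitSum n a b c = weightedOrbitSum (lam n) uGen dGen a b c :=
  rfl

/-- For `n` odd, the product of a degree-`2n` orbit sum with a degree-`n` orbit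
sum in the down-up algebra `A(0,1)` reduces to a product in the other order
(Proposition 3.4 of the paper). -/
theorem orbitSum_deg_two_n_mul_deg_n (n : ℕ) (hodd : Odd n)
    (i j p q : ℕ) (hij : 2 * i + j ≤ n) (hpq : 2 * p + q ≤ 2 * n) :
    (Odd q →
      orbitSum n (2 * n - 2 * p - q) p q * orbitSum n (n - 2 * i - j) i j =
        orbitSum n (n - 2 * i - j) i j * orbitSum n (2 * n - 2 * p - q - 1) (p + 1) (q - 1)) ∧
    (Even q → p = 0 →
      orbitSum n (2 * n - 2 * p - q) p q * orbitSum n (n - 2 * i - j) i j =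
        orbitSum n (n - 2 * i - j) i j * orbitSum n (2 * n - q) 0 q) ∧
    (Even q → 1 ≤ p →
      orbitSum n (2 * n - 2 * p - q) p q * orbitSum n (n - 2 * i - j) i j =
        orbitSum n (n - 2 * i - j) i j * orbitSum n (2 * n - 2 * p - q + 1) (p - 1) (q + 1)) := by
  have even_deg : Even (2 * n - 2 * p - q + q) := by grind
  have odd_deg : Odd (n - 2 * i - j + j) := by grind
  obtain ⟨odd_q, even_q_zero, even_q_pos⟩ := orbitSum_deg_two_n_mul_deg_n_general
    isDownUpPair_uGen_dGen (lam n) (p := p) even_deg odd_deg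
  simp only [orbitSum_eq_weightedOrbitSum]
  exact ⟨odd_q, fun hq hp => by subst hp; exact even_q_zero hq rfl, even_q_pos⟩
end
end
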